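/- Suppose ℓ ≥ 2. For indices i, j ∈ {1,…,ℓ} (mod ℓ) set t(i,j) = V₋(K_j, K_i) + V₊(K_{j+1}, K_i). Then W(K_i) = min_{1≤j≤ℓ} t(i,j). Moreover, t(i,J) = min_{1≤j≤ℓ} t(i,j) holds if and only if ΔS(K_i, A_J) = max_{y∈[x̄, x̄+1]} (S(y) − S(x̄)) for some (equivalently, every) x̄ ∈ ℝ whose projection lies in K_i. -/

import Mathlib

open Set Filter Topology

/-!
Let the gap `j` be the arc from `K_j` to `K_{j+1}`. An edge of a tree costs at least the gaps it
covers, clockwise gaps being charged with `F₊` and anticlockwise ones with `F₋`. In a tree rooted at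
`i`, every `K_j` is joined to `K_i` by a connected set of covered gaps, on one side or the other.
Hence there is a `J` such that all gaps from `K_i` to `K_J` are covered anticlockwise and all gaps
from `K_{J+1}` to `K_i` clockwise, and the tree costs at least `t(i,J)`. Conversely, the tree whose
edges join neighbours and avoid the gap `J` costs at most `t(i,J)`.

Since there is no stable component inside the gap `J`, the primitive `S` increases from `K_J` to
`A_J` and decreases from `A_J` to `K_{J+1}`. Therefore `t(i,J)` equals `∫ F₋` from `K_i` to `A_J`
plus `∫ F₊` from `A_J` on to `K_i`, which is the full integral of `F₊` minus `ΔS(K_i, A_J)`. So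
minimising `t(i,·)` amounts to maximising `S` over one period.
-/

section TreesOnCycle

variable {ℓ : ℕ}

/-- The gaps crossed when moving clockwise from site `j` to site `k` of a cycle with `ℓ` sites, gap
`m` being the one between the sites `m` and `m + 1`. It is empty when `j = k`. -/
def clockwiseArc (j k : Fin ℓ) : Finset (Fin ℓ) := {m | m - j < k - j}

/-- The spanning trees of `ι` whose edges are oriented towards the root `i`, encoded by the map
sending each vertex to the head of its outgoing edge; the value at `i` is irrelevant. -/
abbrev TreeTowards {ι : Type*} (i : ι) : Type _ := {g : ι → ι // ∀ j, ∃ n, g^[n] j = i}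

lemma mem_clockwiseArc {j k m : Fin ℓ} : m ∈ clockwiseArc j k ↔ m - j < k - j := by
  simp [clockwiseArc]

lemma fin_val_sub_eq_ite (j k : Fin ℓ) :
    ((j - k : Fin ℓ) : ℕ) = if k ≤ j then (j : ℕ) - k else ℓ + j - k := by
  split_ifs with h
  · exact Fin.coe_sub_iff_le.2 h
  · exact Fin.coe_sub_iff_lt.2 (not_le.1 h)

lemma clockwiseArc_subset_union (j m k : Fin ℓ) :
    clockwiseArc j k ⊆ clockwiseArc j m ∪ clockwiseArc m k := by
  intro n
  simp only [Finset.mem_union, mem_clockwiseArc, Fin.lt_def, fin_val_sub_eq_ite, Fin.le_def]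
  grind

lemma clockwiseArc_subset_or_subset_of_start (i j m : Fin ℓ) :
    clockwiseArc i j ⊆ clockwiseArc i m ∨ clockwiseArc j i ⊆ clockwiseArc j m := by
  by_cases h : j - i ≤ m - i
  · exact .inl fun n hn ↦ mem_clockwiseArc.2 ((mem_clockwiseArc.1 hn).trans_le h)
  · refine .inr fun n ↦ ?_
    simp only [mem_clockwiseArc, Fin.lt_def, fin_val_sub_eq_ite, Fin.le_def] at h ⊢
    grind

lemma clockwiseArc_subset_or_subset_of_end (i j m : Fin ℓ) :
    clockwiseArc j i ⊆ clockwiseArc m i ∨ clockwiseArc i j ⊆ clockwiseArc m j := by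
  by_cases h : i - j ≤ i - m
  · refine .inl fun n ↦ ?_
    simp only [mem_clockwiseArc, Fin.lt_def, fin_val_sub_eq_ite, Fin.le_def] at h ⊢
    grind
  · refine .inr fun n ↦ ?_
    simp only [mem_clockwiseArc, Fin.lt_def, fin_val_sub_eq_ite, Fin.le_def] at h ⊢
    grind

variable [NeZero ℓ]

lemma fin_val_add_one_eq_ite (j : Fin ℓ) :
    ((j + 1 : Fin ℓ) : ℕ) = if (j : ℕ) + 1 = ℓ then 0 else (j : ℕ) + 1 := by
  rw [Fin.val_add, Fin.val_one', Nat.add_mod_mod]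
  split_ifs with h
  · rw [h, Nat.mod_self]
  · exact Nat.mod_eq_of_lt (by omega)

lemma clockwiseArc_self (j : Fin ℓ) : clockwiseArc j j = ∅ := by
  simp [clockwiseArc]

lemma clockwiseArc_add_one_subset (j : Fin ℓ) : clockwiseArc j (j + 1) ⊆ {j} := by
  intro m
  simp only [mem_clockwiseArc, Finset.mem_singleton, Fin.lt_def, fin_val_sub_eq_ite, Fin.le_def,
    fin_val_add_one_eq_ite, Fin.ext_iff]
  grind

lemma clockwiseArc_eq_insert {j k : Fin ℓ} (hjk : j ≠ k) :
    clockwiseArc j k = insert j (clockwiseArc (j + 1) k) := by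
  ext m
  simp only [Finset.mem_insert, mem_clockwiseArc, Fin.lt_def, fin_val_sub_eq_ite, Fin.le_def,
    fin_val_add_one_eq_ite, Fin.ext_iff, ne_eq] at hjk ⊢
  grind

lemma notMem_clockwiseArc_add_one (j k : Fin ℓ) : j ∉ clockwiseArc (j + 1) k := by
  simp only [mem_clockwiseArc, Fin.lt_def, fin_val_sub_eq_ite, Fin.le_def, fin_val_add_one_eq_ite]
  grind

lemma fin_val_sub_add_one_lt {j k : Fin ℓ} (hjk : j ≠ k) :
    ((k - (j + 1) : Fin ℓ) : ℕ) < (k - j : Fin ℓ) := by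
  simp only [fin_val_sub_eq_ite, Fin.le_def, fin_val_add_one_eq_ite, ne_eq, Fin.ext_iff] at hjk ⊢
  grind

lemma fin_sub_lt_add_one_sub {i j : Fin ℓ} (hji : j + 1 ≠ i) : j - i < j + 1 - i := by
  simp only [Fin.lt_def, fin_val_sub_eq_ite, Fin.le_def, fin_val_add_one_eq_ite, ne_eq,
    Fin.ext_iff] at hji ⊢
  grind

lemma fin_add_one_sub_lt_sub {j k : Fin ℓ} (hjk : j ≠ k) (hjk' : j + 1 ≠ k) :
    j + 1 - j < k - j := by
  simp only [Fin.lt_def, fin_val_sub_eq_ite, Fin.le_def, fin_val_add_one_eq_ite, ne_eq,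
    Fin.ext_iff] at hjk hjk' ⊢
  grind

lemma sub_one_mem_clockwiseArc {i J j : Fin ℓ} (hji : j ≠ i)
    (hj : j ∉ clockwiseArc (J + 1) i) : j - 1 ∈ clockwiseArc i J := by
  obtain ⟨m, rfl⟩ : ∃ m, j = m + 1 := ⟨j - 1, by simp⟩
  rw [add_sub_cancel_right]
  simp only [mem_clockwiseArc, Fin.lt_def, fin_val_sub_eq_ite, Fin.le_def, fin_val_add_one_eq_ite,
    ne_eq, Fin.ext_iff] at hji hj ⊢
  grind

lemma sub_one_notMem_clockwiseArc {i J j : Fin ℓ} (hji : j ≠ i)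
    (hj : j ∉ clockwiseArc (J + 1) i) : j - 1 ∉ clockwiseArc (J + 1) i := by
  obtain ⟨m, rfl⟩ : ∃ m, j = m + 1 := ⟨j - 1, by simp⟩
  rw [add_sub_cancel_right]
  simp only [mem_clockwiseArc, Fin.lt_def, fin_val_sub_eq_ite, Fin.le_def, fin_val_add_one_eq_ite,
    ne_eq, Fin.ext_iff] at hji hj ⊢
  grind

lemma add_one_eq_or_mem_clockwiseArc {i j u : Fin ℓ} (hj : j ∈ clockwiseArc u i) :
    j + 1 = i ∨ j + 1 ∈ clockwiseArc u i := by
  simp only [mem_clockwiseArc, Fin.lt_def, fin_val_sub_eq_ite, Fin.le_def, fin_val_add_one_eq_ite,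
    Fin.ext_iff] at hj ⊢
  grind

lemma fin_val_sub_one_sub_lt {i j : Fin ℓ} (hji : j ≠ i) :
    ((j - 1 - i : Fin ℓ) : ℕ) < (j - i : Fin ℓ) := by
  obtain ⟨m, rfl⟩ : ∃ m, j = m + 1 := ⟨j - 1, by simp⟩
  rw [add_sub_cancel_right]
  simp only [fin_val_sub_eq_ite, Fin.le_def, fin_val_add_one_eq_ite, ne_eq, Fin.ext_iff] at hji ⊢
  grind

lemma fin_cycle_induction {P : Fin ℓ → Prop} (i : Fin ℓ) (base : P i)
    (step : ∀ j, P j → P (j + 1)) (j : Fin ℓ) : P j := by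
  induction h : ((j - i : Fin ℓ) : ℕ) using Nat.strong_induction_on generalizing j with
  | _ n ih =>
    rcases eq_or_ne j i with rfl | hji
    · exact base
    · simpa using step _ (ih _ (h ▸ fin_val_sub_one_sub_lt hji) (j - 1) rfl)

/-- Following the path of the tree from `j` to `i`, a clockwise edge either extends the clockwise
arc or shortens the anticlockwise one, and vice versa. -/
lemma clockwiseArc_subset_of_treeTowards {i : Fin ℓ} (g : TreeTowards i)
    {upGaps downGaps : Finset (Fin ℓ)}
    (hg : ∀ j ≠ i, clockwiseArc j (g.1 j) ⊆ upGaps ∨ clockwiseArc (g.1 j) j ⊆ downGaps)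
    (j : Fin ℓ) : clockwiseArc i j ⊆ downGaps ∨ clockwiseArc j i ⊆ upGaps := by
  obtain ⟨n, hn⟩ := g.2 j
  induction n generalizing j with
  | zero =>
    obtain rfl : j = i := hn
    simp [clockwiseArc_self]
  | succ n ih =>
    rcases eq_or_ne j i with rfl | hji
    · simp [clockwiseArc_self]
    rcases hg j hji with hup | hdown <;> rcases ih (g.1 j) hn with hIH | hIH
    · exact (clockwiseArc_subset_or_subset_of_start i j (g.1 j)).imp
        (·.trans hIH) (·.trans hup)
    · exact .inr ((clockwiseArc_subset_union j (g.1 j) i).trans (Finset.union_subset hup hIH))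
    · exact .inl ((clockwiseArc_subset_union i (g.1 j) j).trans (Finset.union_subset hIH hdown))
    · exact (clockwiseArc_subset_or_subset_of_end i j (g.1 j)).symm.imp
        (·.trans hdown) (·.trans hIH)

lemma exists_clockwiseArc_subset_of_treeTowards {i : Fin ℓ} (g : TreeTowards i)
    {upGaps downGaps : Finset (Fin ℓ)}
    (hg : ∀ j ≠ i, clockwiseArc j (g.1 j) ⊆ upGaps ∨ clockwiseArc (g.1 j) j ⊆ downGaps) :
    ∃ J, clockwiseArc i J ⊆ downGaps ∧ clockwiseArc (J + 1) i ⊆ upGaps := by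
  by_cases hall : ∀ j, clockwiseArc i j ⊆ downGaps
  · exact ⟨i - 1, hall _, by simp [clockwiseArc_self]⟩
  obtain ⟨J, hJ, hJ'⟩ : ∃ J, clockwiseArc i J ⊆ downGaps ∧ ¬ clockwiseArc i (J + 1) ⊆ downGaps := by
    contrapose! hall
    exact fin_cycle_induction i (by simp [clockwiseArc_self]) hall
  exact ⟨J, hJ, (clockwiseArc_subset_of_treeTowards g hg _).resolve_left hJ'⟩

lemma sum_biUnion_le_sum_sum {ι κ M : Type*} [DecidableEq κ] [AddCommMonoid M] [PartialOrder M]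
    [IsOrderedAddMonoid M] {f : κ → M} (hf : 0 ≤ f) (s : Finset ι) (A : ι → Finset κ) :
    ∑ k ∈ s.biUnion A, f k ≤ ∑ j ∈ s, ∑ k ∈ A j, f k := by
  classical
  induction s using Finset.induction_on with
  | empty => simp
  | insert x s hx ih =>
    have hinter : 0 ≤ ∑ k ∈ A x ∩ s.biUnion A, f k := Finset.sum_nonneg fun k _ ↦ hf k
    calc ∑ k ∈ (insert x s).biUnion A, f k
        ≤ ∑ k ∈ A x ∪ s.biUnion A, f k + ∑ k ∈ A x ∩ s.biUnion A, f k := by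
          rw [Finset.biUnion_insert]
          exact le_add_of_nonneg_right hinter
      _ = ∑ k ∈ A x, f k + ∑ k ∈ s.biUnion A, f k := Finset.sum_union_inter
      _ ≤ ∑ j ∈ insert x s, ∑ k ∈ A j, f k := by
          rw [Finset.sum_insert hx]
          gcongr

variable {up down : Fin ℓ → ℝ}

lemma exists_arc_cost_le_tree_cost (hup : 0 ≤ up) (hdown : 0 ≤ down) {i : Fin ℓ}
    (g : TreeTowards i) :
    ∃ J, ∑ k ∈ clockwiseArc i J, down k + ∑ k ∈ clockwiseArc (J + 1) i, up k ≤
      ∑ j ∈ Finset.univ.erase i, min (∑ k ∈ clockwiseArc j (g.1 j), up k)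
        (∑ k ∈ clockwiseArc (g.1 j) j, down k) := by
  let upCost (j : Fin ℓ) : ℝ := ∑ k ∈ clockwiseArc j (g.1 j), up k
  let downCost (j : Fin ℓ) : ℝ := ∑ k ∈ clockwiseArc (g.1 j) j, down k
  let upEdges : Finset (Fin ℓ) := {j ∈ Finset.univ.erase i | upCost j ≤ downCost j}
  let downEdges : Finset (Fin ℓ) := {j ∈ Finset.univ.erase i | ¬ upCost j ≤ downCost j}
  obtain ⟨J, hJdown, hJup⟩ := exists_clockwiseArc_subset_of_treeTowards g
    (upGaps := upEdges.biUnion fun j ↦ clockwiseArc j (g.1 j))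
    (downGaps := downEdges.biUnion fun j ↦ clockwiseArc (g.1 j) j) fun j hj ↦ by
      by_cases h : upCost j ≤ downCost j
      · exact .inl (Finset.subset_biUnion_of_mem (fun j ↦ clockwiseArc j (g.1 j))
          (by simp [upEdges, hj, h]))
      · exact .inr (Finset.subset_biUnion_of_mem (fun j ↦ clockwiseArc (g.1 j) j)
          (by simpa [downEdges, hj] using h))
  refine ⟨J, ?_⟩
  calc ∑ k ∈ clockwiseArc i J, down k + ∑ k ∈ clockwiseArc (J + 1) i, up k
      ≤ ∑ j ∈ downEdges, downCost j + ∑ j ∈ upEdges, upCost j := add_le_add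
        ((Finset.sum_le_sum_of_subset_of_nonneg hJdown fun k _ _ ↦ hdown k).trans
          (sum_biUnion_le_sum_sum hdown _ _))
        ((Finset.sum_le_sum_of_subset_of_nonneg hJup fun k _ _ ↦ hup k).trans
          (sum_biUnion_le_sum_sum hup _ _))
    _ = ∑ j ∈ upEdges, min (upCost j) (downCost j) +
          ∑ j ∈ downEdges, min (upCost j) (downCost j) := by
        rw [add_comm]
        congr 1 <;> refine Finset.sum_congr rfl fun j hj ↦ ?_
        · exact (min_eq_left (Finset.mem_filter.1 hj).2).symm
        · exact (min_eq_right (not_le.1 (Finset.mem_filter.1 hj).2).le).symm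
    _ = ∑ j ∈ Finset.univ.erase i, min (upCost j) (downCost j) :=
        Finset.sum_filter_add_sum_filter_not ..

/-- The tree in which the sites clockwise after `J` move clockwise towards the root `i` and the
others move anticlockwise. -/
def cutTree (i J : Fin ℓ) (j : Fin ℓ) : Fin ℓ :=
  if j ∈ clockwiseArc (J + 1) i then j + 1 else j - 1

lemma cutTree_of_mem {i J j : Fin ℓ} (hj : j ∈ clockwiseArc (J + 1) i) :
    cutTree i J j = j + 1 :=
  if_pos hj

lemma cutTree_of_notMem {i J j : Fin ℓ} (hj : j ∉ clockwiseArc (J + 1) i) :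
    cutTree i J j = j - 1 :=
  if_neg hj

lemma exists_iterate_cutTree_eq_of_mem {i J j : Fin ℓ} (hj : j ∈ clockwiseArc (J + 1) i) :
    ∃ n, (cutTree i J)^[n] j = i := by
  induction h : ((i - j : Fin ℓ) : ℕ) using Nat.strong_induction_on generalizing j with
  | _ n ih =>
    rcases add_one_eq_or_mem_clockwiseArc hj with hi | hj'
    · exact ⟨1, by simpa [cutTree_of_mem hj] using hi⟩
    · have hji : j ≠ i := fun h ↦ by simp [h, mem_clockwiseArc] at hj
      obtain ⟨k, hk⟩ := ih _ (h ▸ fin_val_sub_add_one_lt hji) hj' rfl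
      exact ⟨k + 1, by rw [Function.iterate_succ_apply, cutTree_of_mem hj, hk]⟩

lemma exists_iterate_cutTree_eq_of_notMem {i J j : Fin ℓ} (hj : j ∉ clockwiseArc (J + 1) i) :
    ∃ n, (cutTree i J)^[n] j = i := by
  induction h : ((j - i : Fin ℓ) : ℕ) using Nat.strong_induction_on generalizing j with
  | _ n ih =>
    rcases eq_or_ne j i with rfl | hji
    · exact ⟨0, rfl⟩
    · have hj' := sub_one_notMem_clockwiseArc hji hj
      obtain ⟨k, hk⟩ := ih _ (h ▸ fin_val_sub_one_sub_lt hji) hj' rfl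
      exact ⟨k + 1, by rw [Function.iterate_succ_apply, cutTree_of_notMem hj, hk]⟩

lemma exists_iterate_cutTree_eq (i J j : Fin ℓ) : ∃ n, (cutTree i J)^[n] j = i :=
  if hj : j ∈ clockwiseArc (J + 1) i then exists_iterate_cutTree_eq_of_mem hj
  else exists_iterate_cutTree_eq_of_notMem hj

lemma sum_clockwiseArc_add_one_le {f : Fin ℓ → ℝ} (hf : 0 ≤ f) (j : Fin ℓ) :
    ∑ k ∈ clockwiseArc j (j + 1), f k ≤ f j := by
  simpa using Finset.sum_le_sum_of_subset_of_nonneg (clockwiseArc_add_one_subset j)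
    fun k _ _ ↦ hf k

lemma tree_cost_cutTree_le (hup : 0 ≤ up) (hdown : 0 ≤ down) (i J : Fin ℓ) :
    ∑ j ∈ Finset.univ.erase i, min (∑ k ∈ clockwiseArc j (cutTree i J j), up k)
        (∑ k ∈ clockwiseArc (cutTree i J j) j, down k) ≤
      ∑ k ∈ clockwiseArc i J, down k + ∑ k ∈ clockwiseArc (J + 1) i, up k := by
  rw [← Finset.sum_filter_not_add_sum_filter _ (· ∈ clockwiseArc (J + 1) i)]
  refine add_le_add ?_ ?_
  · let downSites : Finset (Fin ℓ) := {j ∈ Finset.univ.erase i | j ∉ clockwiseArc (J + 1) i}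
    calc _ ≤ ∑ j ∈ downSites, down (j - 1) := Finset.sum_le_sum fun j hj ↦ by
          rw [cutTree_of_notMem (Finset.mem_filter.1 hj).2]
          simpa using (min_le_right _ _).trans (sum_clockwiseArc_add_one_le hdown (j - 1))
      _ = ∑ k ∈ downSites.image (· - 1), down k :=
          (Finset.sum_image (sub_left_injective (b := (1 : Fin ℓ))).injOn).symm
      _ ≤ ∑ k ∈ clockwiseArc i J, down k :=
          Finset.sum_le_sum_of_subset_of_nonneg (Finset.image_subset_iff.2 fun j hj ↦
            have hj := Finset.mem_filter.1 hj
            sub_one_mem_clockwiseArc (Finset.ne_of_mem_erase hj.1) hj.2) fun k _ _ ↦ hdown k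
  · let upSites : Finset (Fin ℓ) := {j ∈ Finset.univ.erase i | j ∈ clockwiseArc (J + 1) i}
    calc _ ≤ ∑ j ∈ upSites, up j := Finset.sum_le_sum fun j hj ↦ by
          rw [cutTree_of_mem (Finset.mem_filter.1 hj).2]
          exact (min_le_left _ _).trans (sum_clockwiseArc_add_one_le hup j)
      _ ≤ ∑ k ∈ clockwiseArc (J + 1) i, up k :=
          Finset.sum_le_sum_of_subset_of_nonneg (fun j hj ↦ (Finset.mem_filter.1 hj).2)
            fun k _ _ ↦ hup k

theorem iInf_tree_cost_eq_iInf_arc_cost (hup : 0 ≤ up) (hdown : 0 ≤ down) (i : Fin ℓ) :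
    ⨅ g : TreeTowards i, ∑ j ∈ Finset.univ.erase i, min (∑ k ∈ clockwiseArc j (g.1 j), up k)
        (∑ k ∈ clockwiseArc (g.1 j) j, down k) =
      ⨅ J, (∑ k ∈ clockwiseArc i J, down k + ∑ k ∈ clockwiseArc (J + 1) i, up k) := by
  have : Nonempty (TreeTowards i) := ⟨cutTree i i, exists_iterate_cutTree_eq i i⟩
  apply le_antisymm
  · refine le_ciInf fun J ↦ ciInf_le_of_le (finite_range _).bddBelow
      ⟨cutTree i J, exists_iterate_cutTree_eq i J⟩ ?_
    exact tree_cost_cutTree_le hup hdown i J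
  · refine le_ciInf fun g ↦ ?_
    obtain ⟨J, hJ⟩ := exists_arc_cost_le_tree_cost hup hdown g
    exact ciInf_le_of_le (finite_range _).bddBelow J hJ

end TreesOnCycle

section ArcIntegrals

/-- The integral of `f` along the clockwise arc of the circle `ℝ / ℤ` from `u` to `v`; it vanishes
when `u` and `v` differ by an integer. -/
noncomputable def arcIntegral (f : ℝ → ℝ) (u v : ℝ) : ℝ := ∫ s in u..(u + Int.fract (v - u)), f s

lemma add_fract_sub_eq {x y z : ℝ} {k : ℤ} (hz : z = y + k) (hxz : x ≤ z) (hzx : z < x + 1) :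
    x + Int.fract (y - x) = z := by
  have hfract : Int.fract (y - x) = z - x :=
    Int.fract_eq_iff.2 ⟨by linarith, by linarith, -k, by rw [hz]; push_cast; ring⟩
  rw [hfract, add_sub_cancel]

variable {f g : ℝ → ℝ}

lemma arcIntegral_eq_integral (hf : Function.Periodic f 1) {u v u' v' : ℝ} {k m : ℤ}
    (hu : u' = u + k) (hv : v' = v + m) (huv : u' ≤ v') (hvu : v' < u' + 1) :
    arcIntegral f u v = ∫ s in u'..v', f s := by
  have hper : Function.Periodic f k := by simpa using hf.int_mul k
  have hv' : u + Int.fract (v - u) = v' - k :=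
    add_fract_sub_eq (k := m - k) (by rw [hv]; push_cast; ring) (by linarith) (by linarith)
  calc arcIntegral f u v = ∫ s in u..(v' - k), f (s + k) := by
        rw [arcIntegral, hv', funext hper]
    _ = ∫ s in u'..v', f s := by
        rw [intervalIntegral.integral_comp_add_right, sub_add_cancel, hu]

lemma arcIntegral_nonneg (hf : 0 ≤ f) (u v : ℝ) : 0 ≤ arcIntegral f u v :=
  intervalIntegral.integral_nonneg (le_add_of_nonneg_right (Int.fract_nonneg _)) fun s _ ↦ hf s

variable {ℓ : ℕ}

/-- The points `p 0 < p 1 < ⋯` represent `ℓ` distinct points of the circle `ℝ / ℤ`, listed in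
clockwise order. -/
structure IsCyclicLift (p : Fin ℓ → ℝ) : Prop where
  strictMono : StrictMono p
  lt_add_one (j k : Fin ℓ) : p k < p j + 1

/-- The translates of the points `p j` by which they are met when moving clockwise from `p i`. -/
noncomputable def liftFrom (i : Fin ℓ) (p : Fin ℓ → ℝ) (j : Fin ℓ) : ℝ :=
  p j + if j < i then 1 else 0

/-- The translate of the cyclic successor of `p j` that follows `p j` on the line. -/
noncomputable def cyclicSucc [NeZero ℓ] (p : Fin ℓ → ℝ) (j : Fin ℓ) : ℝ :=
  p (j + 1) + if (j : ℕ) + 1 = ℓ then 1 else 0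

lemma exists_int_liftFrom_eq (i : Fin ℓ) (p : Fin ℓ → ℝ) (j : Fin ℓ) :
    ∃ k : ℤ, liftFrom i p j = p j + k :=
  ⟨if j < i then 1 else 0, by simp [liftFrom]⟩

lemma liftFrom_self (i : Fin ℓ) (p : Fin ℓ → ℝ) : liftFrom i p i = p i := by
  simp [liftFrom]

lemma liftFrom_le_liftFrom_iff {i j : Fin ℓ} {p q : Fin ℓ → ℝ} :
    liftFrom i p j ≤ liftFrom i q j ↔ p j ≤ q j :=
  add_le_add_iff_right _

lemma forall_mem_Icc_add_ite (hf : Function.Periodic f 1) {P : ℝ → Prop} {u v : ℝ}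
    (c : Prop) [Decidable c] (hP : ∀ x ∈ Icc u v, P (f x)) :
    ∀ x ∈ Icc (u + if c then 1 else 0) (v + if c then 1 else 0), P (f x) := by
  intro x hx
  split_ifs at hx
  · rw [← hf.sub_eq]
    exact hP _ ⟨by linarith [hx.1], by linarith [hx.2]⟩
  · exact hP x (by simpa using hx)

lemma forall_mem_Icc_liftFrom (hf : Function.Periodic f 1) {P : ℝ → Prop} {p q : Fin ℓ → ℝ}
    (i : Fin ℓ) {j : Fin ℓ} (hP : ∀ x ∈ Icc (p j) (q j), P (f x)) :
    ∀ x ∈ Icc (liftFrom i p j) (liftFrom i q j), P (f x) :=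
  forall_mem_Icc_add_ite hf _ hP

lemma forall_mem_Icc_cyclicSucc [NeZero ℓ] (hf : Function.Periodic f 1) {P : ℝ → Prop}
    {p q : Fin ℓ → ℝ} {j : Fin ℓ} (hP : ∀ x ∈ Icc (p (j + 1)) (q (j + 1)), P (f x)) :
    ∀ x ∈ Icc (cyclicSucc p j) (cyclicSucc q j), P (f x) :=
  forall_mem_Icc_add_ite hf _ hP

lemma liftFrom_cyclicSucc_of_add_one_eq [NeZero ℓ] {i j : Fin ℓ} (p : Fin ℓ → ℝ)
    (hji : j + 1 = i) : liftFrom i (cyclicSucc p) j = p i + 1 := by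
  subst hji
  simp only [liftFrom, cyclicSucc, Fin.lt_def, fin_val_add_one_eq_ite]
  split_ifs <;> grind

lemma liftFrom_cyclicSucc_of_add_one_ne [NeZero ℓ] {i j : Fin ℓ} (p : Fin ℓ → ℝ)
    (hji : j + 1 ≠ i) : liftFrom i (cyclicSucc p) j = liftFrom i p (j + 1) := by
  simp only [liftFrom, cyclicSucc, Fin.lt_def, Fin.ext_iff, fin_val_add_one_eq_ite, ne_eq] at hji ⊢
  split_ifs <;> grind

lemma exists_int_liftFrom_cyclicSucc_eq [NeZero ℓ] (i : Fin ℓ) (p : Fin ℓ → ℝ) (j : Fin ℓ) :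
    ∃ k : ℤ, liftFrom i (cyclicSucc p) j = p (j + 1) + k := by
  rcases eq_or_ne (j + 1) i with rfl | hji
  · exact ⟨1, by simp [liftFrom_cyclicSucc_of_add_one_eq p rfl]⟩
  · rw [liftFrom_cyclicSucc_of_add_one_ne p hji]
    exact exists_int_liftFrom_eq i p (j + 1)

lemma exists_mem_Icc_liftFrom [NeZero ℓ] (p : Fin ℓ → ℝ) (i : Fin ℓ) {y : ℝ}
    (hy : y ∈ Icc (p i) (p i + 1)) :
    ∃ j, y ∈ Icc (liftFrom i p j) (liftFrom i (cyclicSucc p) j) := by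
  obtain ⟨j, hjy, hmax⟩ := Set.exists_max_image {j | liftFrom i p j ≤ y} (fun j ↦ j - i)
    (toFinite _) ⟨i, (liftFrom_self i p).trans_le hy.1⟩
  refine ⟨j, hjy, ?_⟩
  rcases eq_or_ne (j + 1) i with hji | hji
  · rw [liftFrom_cyclicSucc_of_add_one_eq p hji]
    exact hy.2
  · rw [liftFrom_cyclicSucc_of_add_one_ne p hji]
    by_contra! hlt
    exact (hmax (j + 1) hlt.le).not_gt (fin_sub_lt_add_one_sub hji)

namespace IsCyclicLift

variable {p : Fin ℓ → ℝ}

lemma liftFrom_lt_liftFrom (hp : IsCyclicLift p) {i j k : Fin ℓ} (hjk : j - i < k - i) :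
    liftFrom i p j < liftFrom i p k := by
  simp only [Fin.lt_def, fin_val_sub_eq_ite, Fin.le_def] at hjk
  by_cases hlt : j < k
  · have := hp.strictMono hlt
    simp only [liftFrom]
    split_ifs <;> grind
  · have := hp.lt_add_one j k
    have := hp.lt_add_one k j
    simp only [liftFrom]
    split_ifs <;> grind

lemma le_liftFrom (hp : IsCyclicLift p) (i j : Fin ℓ) : p i ≤ liftFrom i p j := by
  unfold liftFrom
  split_ifs with h
  · exact (hp.lt_add_one j i).le
  · simpa using hp.strictMono.monotone (not_lt.1 h)

lemma liftFrom_lt_add_one (hp : IsCyclicLift p) (i j : Fin ℓ) : liftFrom i p j < p i + 1 := by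
  unfold liftFrom
  split_ifs with h
  · linarith [hp.strictMono h]
  · simpa using hp.lt_add_one i j

variable [NeZero ℓ]

lemma lt_liftFrom_cyclicSucc (hp : IsCyclicLift p) (i j : Fin ℓ) :
    p i < liftFrom i (cyclicSucc p) j := by
  rcases eq_or_ne (j + 1) i with hji | hji
  · simp [liftFrom_cyclicSucc_of_add_one_eq p hji]
  · rw [liftFrom_cyclicSucc_of_add_one_ne p hji]
    have h := hp.liftFrom_lt_liftFrom (i := i) (j := i) (k := j + 1) (by
      rw [sub_self]
      exact (Fin.zero_le _).trans_lt (fin_sub_lt_add_one_sub hji))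
    rwa [liftFrom_self] at h

lemma liftFrom_cyclicSucc_le (hp : IsCyclicLift p) (i j : Fin ℓ) :
    liftFrom i (cyclicSucc p) j ≤ p i + 1 := by
  rcases eq_or_ne (j + 1) i with hji | hji
  · exact (liftFrom_cyclicSucc_of_add_one_eq p hji).le
  · rw [liftFrom_cyclicSucc_of_add_one_ne p hji]
    exact (hp.liftFrom_lt_add_one i (j + 1)).le

lemma arcIntegral_eq_add (hp : IsCyclicLift p) (hf : Continuous f) (hper : Function.Periodic f 1)
    {j k : Fin ℓ} (hjk : j ≠ k) :
    arcIntegral f (p j) (p k) =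
      arcIntegral f (p j) (p (j + 1)) + arcIntegral f (p (j + 1)) (p k) := by
  obtain ⟨m, hm⟩ := exists_int_liftFrom_eq j p (j + 1)
  obtain ⟨n, hn⟩ := exists_int_liftFrom_eq j p k
  have hj : p j = p j + (0 : ℤ) := by simp
  have hle : liftFrom j p (j + 1) ≤ liftFrom j p k := by
    rcases eq_or_ne (j + 1) k with rfl | hne
    · rfl
    · exact (hp.liftFrom_lt_liftFrom (fin_add_one_sub_lt_sub hjk hne)).le
  have hlt := hp.liftFrom_lt_add_one j
  have hge := hp.le_liftFrom j
  rw [arcIntegral_eq_integral hper hj hn (hge k) (hlt k),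
    arcIntegral_eq_integral hper hj hm (hge _) (hlt _),
    arcIntegral_eq_integral hper hm hn hle ((hlt k).trans_le (by gcongr; exact hge _)),
    intervalIntegral.integral_add_adjacent_intervals (hf.intervalIntegrable _ _)
      (hf.intervalIntegrable _ _)]

lemma arcIntegral_eq_sum (hp : IsCyclicLift p) (hf : Continuous f) (hper : Function.Periodic f 1)
    (j k : Fin ℓ) :
    arcIntegral f (p j) (p k) = ∑ m ∈ clockwiseArc j k, arcIntegral f (p m) (p (m + 1)) := by
  induction h : ((k - j : Fin ℓ) : ℕ) using Nat.strong_induction_on generalizing j with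
  | _ n ih =>
    rcases eq_or_ne j k with rfl | hjk
    · simp [clockwiseArc_self, arcIntegral]
    · rw [hp.arcIntegral_eq_add hf hper hjk, clockwiseArc_eq_insert hjk,
        Finset.sum_insert (notMem_clockwiseArc_add_one j k),
        ih _ (h ▸ fin_val_sub_add_one_lt hjk) (j + 1) rfl]

lemma exists_arcIntegral_eq_sum (hp : IsCyclicLift p) (hf : Continuous f)
    (hper : Function.Periodic f 1) (hf0 : 0 ≤ f) :
    ∃ w : Fin ℓ → ℝ, 0 ≤ w ∧ ∀ j k, arcIntegral f (p j) (p k) = ∑ m ∈ clockwiseArc j k, w m :=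
  ⟨_, fun _ ↦ arcIntegral_nonneg hf0 _ _, hp.arcIntegral_eq_sum hf hper⟩

end IsCyclicLift

variable [NeZero ℓ] {p : Fin ℓ → ℝ}

/-- The cost of moving every point `p j` to `p i` without crossing the gap between `p J` and
`p (J + 1)`, where `f` is the density of the clockwise cost and `g` that of the anticlockwise one.
-/
noncomputable def cutCost (f g : ℝ → ℝ) (p : Fin ℓ → ℝ) (i J : Fin ℓ) : ℝ :=
  arcIntegral g (p i) (p J) + arcIntegral f (p (J + 1)) (p i)

theorem iInf_tree_arcIntegral_eq_iInf_cutCost (hp : IsCyclicLift p)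
    (hf : Continuous f) (hfper : Function.Periodic f 1) (hf0 : 0 ≤ f)
    (hg : Continuous g) (hgper : Function.Periodic g 1) (hg0 : 0 ≤ g) (i : Fin ℓ) :
    ⨅ T : TreeTowards i, ∑ j ∈ Finset.univ.erase i,
        min (arcIntegral f (p j) (p (T.1 j))) (arcIntegral g (p (T.1 j)) (p j)) =
      ⨅ J, cutCost f g p i J := by
  obtain ⟨up, hup, hup_sum⟩ := hp.exists_arcIntegral_eq_sum hf hfper hf0
  obtain ⟨down, hdown, hdown_sum⟩ := hp.exists_arcIntegral_eq_sum hg hgper hg0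
  simp only [cutCost, hup_sum, hdown_sum]
  exact iInf_tree_cost_eq_iInf_arc_cost hup hdown i

lemma cutCost_eq_integral_add_integral (hp : IsCyclicLift p) (hf : Function.Periodic f 1)
    (hg : Function.Periodic g 1) (i J : Fin ℓ) :
    cutCost f g p i J = (∫ s in p i..liftFrom i p J, g s) +
      ∫ s in liftFrom i (cyclicSucc p) J..(p i + 1), f s := by
  obtain ⟨k, hk⟩ := exists_int_liftFrom_eq i p J
  obtain ⟨m, hm⟩ := exists_int_liftFrom_cyclicSucc_eq i p J
  rw [cutCost, arcIntegral_eq_integral (k := 0) hg (by simp) hk (hp.le_liftFrom i J)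
      (hp.liftFrom_lt_add_one i J),
    arcIntegral_eq_integral (m := 1) hf hm (by simp) (hp.liftFrom_cyclicSucc_le i J)
      (by linarith [hp.lt_liftFrom_cyclicSucc i J])]

end ArcIntegrals

section CutCost

variable {F S : ℝ → ℝ}

lemma integral_negPart_add_integral_posPart (hF : Continuous F) (hS : ∀ x, HasDerivAt S (F x) x)
    (x y z : ℝ) :
    (∫ s in x..y, max (-F s) 0) + ∫ s in y..z, max (F s) 0 =
      (∫ s in x..z, max (F s) 0) - (S y - S x) := by
  have hpos (u v : ℝ) : IntervalIntegrable (fun s ↦ max (F s) 0) MeasureTheory.volume u v :=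
    (hF.max continuous_const).intervalIntegrable u v
  have hneg : ∫ s in x..y, max (-F s) 0 = (∫ s in x..y, max (F s) 0) - (S y - S x) := by
    rw [← intervalIntegral.integral_eq_sub_of_hasDerivAt (fun u _ ↦ hS u)
        (hF.intervalIntegrable x y),
      ← intervalIntegral.integral_sub (hpos x y) (hF.intervalIntegrable x y)]
    refine intervalIntegral.integral_congr fun s _ ↦ ?_
    have := max_zero_sub_max_neg_zero_eq_self (F s)
    grind
  rw [hneg, ← intervalIntegral.integral_add_adjacent_intervals (hpos x y) (hpos y z)]
  ring

lemma integral_max_zero_eq_zero {f : ℝ → ℝ} {u v : ℝ} (huv : u ≤ v)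
    (hf : ∀ x ∈ Icc u v, f x ≤ 0) : ∫ s in u..v, max (f s) 0 = 0 := by
  rw [intervalIntegral.integral_congr (g := fun _ ↦ (0 : ℝ))]
  · simp
  · exact fun s hs ↦ max_eq_right (hf s (uIcc_of_le huv ▸ hs))

variable {ℓ : ℕ} [NeZero ℓ] {p q : Fin ℓ → ℝ}

lemma cutCost_add_integral_add_integral (hF : Continuous F) (hper : Function.Periodic F 1)
    (hS : ∀ x, HasDerivAt S (F x) x) (hp : IsCyclicLift p) (i j : Fin ℓ) (y : ℝ) :
    cutCost (fun s ↦ max (F s) 0) (fun s ↦ max (-F s) 0) p i j +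
        ((∫ s in liftFrom i p j..y, max (-F s) 0) +
          ∫ s in y..liftFrom i (cyclicSucc p) j, max (F s) 0) =
      (∫ s in p i..(p i + 1), max (F s) 0) - (S y - S (p i)) := by
  have hpos (u v : ℝ) : IntervalIntegrable (fun s ↦ max (F s) 0) MeasureTheory.volume u v :=
    (hF.max continuous_const).intervalIntegrable u v
  have hneg (u v : ℝ) : IntervalIntegrable (fun s ↦ max (-F s) 0) MeasureTheory.volume u v :=
    (hF.neg.max continuous_const).intervalIntegrable u v
  rw [cutCost_eq_integral_add_integral hp (fun x ↦ by simp only [hper x])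
      (fun x ↦ by simp only [hper x]),
    ← integral_negPart_add_integral_posPart hF hS (p i) y (p i + 1),
    ← intervalIntegral.integral_add_adjacent_intervals (hneg (p i) (liftFrom i p j)) (hneg _ y),
    ← intervalIntegral.integral_add_adjacent_intervals
      (hpos y (liftFrom i (cyclicSucc p) j)) (hpos _ (p i + 1))]
  ring

/-- The peaks `q` separate the sites `p`: on the way from `p j` to its cyclic successor, a primitive
of `F` increases up to `q j` and decreases afterwards. -/
structure IsPeakSequence (F : ℝ → ℝ) (p q : Fin ℓ → ℝ) : Prop where
  le (j : Fin ℓ) : p j ≤ q j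
  le_cyclicSucc (j : Fin ℓ) : q j ≤ cyclicSucc p j
  nonneg (j : Fin ℓ) : ∀ x ∈ Icc (p j) (q j), 0 ≤ F x
  nonpos (j : Fin ℓ) : ∀ x ∈ Icc (q j) (cyclicSucc p j), F x ≤ 0

lemma cutCost_le_sub (hF : Continuous F) (hper : Function.Periodic F 1)
    (hS : ∀ x, HasDerivAt S (F x) x) (hp : IsCyclicLift p) {i j : Fin ℓ} {y : ℝ}
    (hy : y ∈ Icc (liftFrom i p j) (liftFrom i (cyclicSucc p) j)) :
    cutCost (fun s ↦ max (F s) 0) (fun s ↦ max (-F s) 0) p i j ≤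
      (∫ s in p i..(p i + 1), max (F s) 0) - (S y - S (p i)) := by
  rw [← cutCost_add_integral_add_integral hF hper hS hp i j y]
  exact le_add_of_nonneg_right (add_nonneg
    (intervalIntegral.integral_nonneg hy.1 fun s _ ↦ le_max_right _ _)
    (intervalIntegral.integral_nonneg hy.2 fun s _ ↦ le_max_right _ _))

lemma IsPeakSequence.cutCost_eq_sub (hq : IsPeakSequence F p q) (hF : Continuous F)
    (hper : Function.Periodic F 1) (hS : ∀ x, HasDerivAt S (F x) x) (hp : IsCyclicLift p)
    (i j : Fin ℓ) :
    cutCost (fun s ↦ max (F s) 0) (fun s ↦ max (-F s) 0) p i j =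
      (∫ s in p i..(p i + 1), max (F s) 0) - (S (liftFrom i q j) - S (p i)) := by
  rw [← cutCost_add_integral_add_integral hF hper hS hp i j (liftFrom i q j),
    integral_max_zero_eq_zero (liftFrom_le_liftFrom_iff.2 (hq.le j)),
    integral_max_zero_eq_zero (liftFrom_le_liftFrom_iff.2 (hq.le_cyclicSucc j)), add_zero, add_zero]
  · exact forall_mem_Icc_liftFrom hper (P := (· ≤ 0)) i (hq.nonpos j)
  · exact forall_mem_Icc_liftFrom hper (P := (- · ≤ 0)) i fun x hx ↦ neg_nonpos.2 (hq.nonneg j x hx)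

theorem IsPeakSequence.cutCost_eq_iInf_iff (hq : IsPeakSequence F p q) (hF : Continuous F)
    (hper : Function.Periodic F 1) (hS : ∀ x, HasDerivAt S (F x) x) (hp : IsCyclicLift p)
    (i J : Fin ℓ) :
    cutCost (fun s ↦ max (F s) 0) (fun s ↦ max (-F s) 0) p i J =
        ⨅ j, cutCost (fun s ↦ max (F s) 0) (fun s ↦ max (-F s) 0) p i j ↔
      IsMaxOn S (Icc (p i) (p i + 1)) (liftFrom i q J) := by
  have hcost := hq.cutCost_eq_sub hF hper hS hp i
  constructor
  · refine fun hJ ↦ isMaxOn_iff.2 fun y hy ↦ ?_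
    obtain ⟨j, hj⟩ := exists_mem_Icc_liftFrom p i hy
    have hJj := hJ.trans_le (ciInf_le (finite_range _).bddBelow j)
    have hjy := cutCost_le_sub hF hper hS hp hj
    rw [hcost] at hJj
    linarith
  · intro hmax
    refine le_antisymm (le_ciInf fun j ↦ ?_) (ciInf_le (finite_range _).bddBelow J)
    have hj : S (liftFrom i q j) ≤ S (liftFrom i q J) :=
      hmax ⟨(hp.le_liftFrom i j).trans (liftFrom_le_liftFrom_iff.2 (hq.le j)),
        (liftFrom_le_liftFrom_iff.2 (hq.le_cyclicSucc j)).trans (hp.liftFrom_cyclicSucc_le i j)⟩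
    rw [hcost, hcost]
    linarith

lemma sub_eq_sSup_image_iff_isMaxOn {X : Type*} [TopologicalSpace X] {f : X → ℝ} {s : Set X}
    (hs : IsCompact s) (hf : ContinuousOn f s) {y : X} (hy : y ∈ s) (c : ℝ) :
    f y - c = sSup ((fun z ↦ f z - c) '' s) ↔ IsMaxOn f s y := by
  have hbdd : BddAbove ((fun z ↦ f z - c) '' s) :=
    (hs.image_of_continuousOn (hf.sub continuousOn_const)).bddAbove
  constructor
  · intro h z hz
    exact (sub_le_sub_iff_right c).1 (h ▸ le_csSup hbdd (mem_image_of_mem _ hz))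
  · intro h
    refine Eq.symm <| IsGreatest.csSup_eq ⟨mem_image_of_mem _ hy, ?_⟩
    rintro _ ⟨z, hz, rfl⟩
    exact sub_le_sub_right (h hz) c

lemma isMaxOn_Icc_add_one_of_eqOn_zero (hper : Function.Periodic F 1)
    (hS : ∀ x, HasDerivAt S (F x) x) {a b x x' y : ℝ} (hzero : ∀ z ∈ Icc a b, F z = 0)
    (hx : x ∈ Icc a b) (hx' : x' ∈ Icc a b) (hmax : IsMaxOn S (Icc x (x + 1)) y) :
    IsMaxOn S (Icc x' (x' + 1)) y := by
  have hconst {u v : ℝ} (huv : ∀ z ∈ Icc u v, F z = 0) : ∀ z ∈ Icc u v, S z = S u :=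
    constant_of_has_deriv_right_zero (fun z _ ↦ (hS z).continuousAt.continuousWithinAt)
      fun z hz ↦ (huv z (Ico_subset_Icc_self hz) ▸ hS z).hasDerivWithinAt
  have hzero' : ∀ z ∈ Icc (a + 1) (b + 1), F z = 0 := fun z hz ↦
    hper.sub_eq z ▸ hzero (z - 1) ⟨by linarith [hz.1], by linarith [hz.2]⟩
  refine isMaxOn_iff.2 fun z hz ↦ ?_
  rcases lt_or_ge z x with hzx | hxz
  · have hz_eq := hconst hzero z ⟨hx'.1.trans hz.1, hzx.le.trans hx.2⟩
    rw [hz_eq, ← hconst hzero x hx]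
    exact hmax ⟨le_rfl, by linarith⟩
  rcases lt_or_ge (x + 1) z with hxz' | hzx
  · have hz_eq := hconst hzero' z ⟨by linarith [hx.1], by linarith [hz.2, hx'.2]⟩
    rw [hz_eq, ← hconst hzero' (x + 1) ⟨by linarith [hx.1], by linarith [hx.2]⟩]
    exact hmax ⟨by linarith, le_rfl⟩
  · exact hmax ⟨hxz, hzx⟩

lemma add_fract_sub_eq_liftFrom {a b : Fin ℓ → ℝ} (ha : IsCyclicLift a) (hb : IsCyclicLift b)
    {i J : Fin ℓ} (hbq : b J ≤ q J) (hqa : q J < cyclicSucc a J) {x : ℝ}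
    (hx : x ∈ Icc (a i) (b i)) : x + Int.fract (q J - x) = liftFrom i q J := by
  obtain ⟨k, hk⟩ := exists_int_liftFrom_eq i q J
  refine add_fract_sub_eq hk ?_ ?_
  · exact hx.2.trans ((hb.le_liftFrom i J).trans (liftFrom_le_liftFrom_iff.2 hbq))
  · calc liftFrom i q J < liftFrom i (cyclicSucc a) J := by unfold liftFrom; gcongr
      _ ≤ a i + 1 := ha.liftFrom_cyclicSucc_le i J
      _ ≤ x + 1 := by linarith [hx.1]

end CutCost

section StableIntervals

/-- Near each of its zeros, every further zero of `F` belongs to the same interval of zeros. -/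
def HasIsolatedZeroIntervals (F : ℝ → ℝ) : Prop :=
  ∀ x, F x = 0 → ∀ᶠ y in 𝓝 x, F y = 0 → ∀ z ∈ uIcc x y, F z = 0

/-- `[a, b]` is a stable component of the zero set of `F`: an interval of zeros at which `F` passes
from negative to positive values. -/
structure IsStableInterval (F : ℝ → ℝ) (a b : ℝ) : Prop where
  le : a ≤ b
  eq_zero : ∀ x ∈ Icc a b, F x = 0
  neg_left : ∀ᶠ x in 𝓝[<] a, F x < 0
  pos_right : ∀ᶠ x in 𝓝[>] b, 0 < F x

lemma exists_forall_mem_Ico_and_forall_mem_Ioc {P Q : ℝ → Prop} {a b : ℝ}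
    (hP : ∀ᶠ x in 𝓝[<] a, P x) (hQ : ∀ᶠ x in 𝓝[>] b, Q x) :
    ∃ ε > 0, (∀ x ∈ Ico (a - ε) a, P x) ∧ ∀ x ∈ Ioc b (b + ε), Q x := by
  obtain ⟨l, hl, hPl⟩ := mem_nhdsLT_iff_exists_Ico_subset.1 hP
  obtain ⟨r, hr, hQr⟩ := mem_nhdsGT_iff_exists_Ioc_subset.1 hQ
  rw [mem_Iio] at hl
  rw [mem_Ioi] at hr
  refine ⟨min (a - l) (r - b), by grind, fun x hx ↦ hPl ?_, fun x hx ↦ hQr ?_⟩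
  · exact ⟨by linarith [hx.1, min_le_left (a - l) (r - b)], hx.2⟩
  · exact ⟨hx.1, by linarith [hx.2, min_le_right (a - l) (r - b)]⟩

lemma eventually_uIcc_subset_of_finite_connectedComponents {Z : Set ℝ}
    [Finite (ConnectedComponents Z)] {x : ℝ} (hx : x ∈ Z) : ∀ᶠ y in 𝓝[Z] x, uIcc x y ⊆ Z := by
  have hopen : IsOpen (connectedComponent (⟨x, hx⟩ : Z)) := by
    rw [← connectedComponents_preimage_singleton]
    exact (isOpen_discrete _).preimage ConnectedComponents.continuous_coe
  rw [← map_nhds_subtype_val ⟨x, hx⟩, eventually_map]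
  filter_upwards [hopen.mem_nhds mem_connectedComponent] with y hy
  have hconn : OrdConnected (Subtype.val '' connectedComponent (⟨x, hx⟩ : Z)) :=
    (isPreconnected_connectedComponent.image _ continuous_subtype_val.continuousOn).ordConnected
  exact (hconn.uIcc_subset (mem_image_of_mem _ mem_connectedComponent)
    (mem_image_of_mem _ hy)).trans (Subtype.coe_image_subset _ _)

variable {F : ℝ → ℝ}

lemma eventually_eq_zero_on_uIcc_of_add_mem_Icc (hper : Function.Periodic F 1)
    [Finite (ConnectedComponents {x : ℝ | F x = 0 ∧ x ∈ Icc (0 : ℝ) 1})] {x : ℝ} (hx : F x = 0)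
    {k : ℤ} (hk : x + k ∈ Icc (0 : ℝ) 1) :
    ∀ᶠ y in 𝓝 x, y + (k : ℝ) ∈ Icc (0 : ℝ) 1 → F y = 0 → ∀ z ∈ uIcc x y, F z = 0 := by
  have hper : Function.Periodic F k := by simpa using hper.int_mul k
  have hnear := eventually_nhdsWithin_iff.1
    (eventually_uIcc_subset_of_finite_connectedComponents
      (Z := {x : ℝ | F x = 0 ∧ x ∈ Icc (0 : ℝ) 1}) ⟨(hper x).trans hx, hk⟩)
  filter_upwards [(continuous_add_const (k : ℝ)).continuousAt.eventually hnear]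
    with y hy hyk hFy z hz
  have hzk : z + k ∈ uIcc (x + k) (y + k) := by simpa [mem_uIcc] using hz
  rw [← hper]
  exact (hy ⟨(hper y).trans hFy, hyk⟩ hzk).1

lemma hasIsolatedZeroIntervals_of_finite_connectedComponents (hper : Function.Periodic F 1)
    [Finite (ConnectedComponents {x : ℝ | F x = 0 ∧ x ∈ Icc (0 : ℝ) 1})] :
    HasIsolatedZeroIntervals F := by
  intro x hx
  have hright := eventually_eq_zero_on_uIcc_of_add_mem_Icc hper hx (k := -⌊x⌋)
    (by push_cast; exact ⟨by linarith [Int.floor_le x], by linarith [Int.lt_floor_add_one x]⟩)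
  have hleft := eventually_eq_zero_on_uIcc_of_add_mem_Icc hper hx (k := 1 - ⌈x⌉)
    (by push_cast; exact ⟨by linarith [Int.ceil_lt_add_one x], by linarith [Int.le_ceil x]⟩)
  filter_upwards [hright, hleft, eventually_lt_nhds (Int.lt_floor_add_one x),
    eventually_gt_nhds (sub_lt_iff_lt_add.2 (Int.ceil_lt_add_one x))] with y hr hl hy_lt hy_gt
  push_cast at hr hl
  rcases le_total x y with hxy | hyx
  · exact hr ⟨by linarith [Int.floor_le x], by linarith⟩
  · exact hl ⟨by linarith, by linarith [Int.le_ceil x]⟩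

lemma HasIsolatedZeroIntervals.eventually_pos_right (hZ : HasIsolatedZeroIntervals F)
    (hF : Continuous F) {b : ℝ} (hb : F b = 0) (hpos : ∃ᶠ z in 𝓝[>] b, 0 < F z) :
    ∀ᶠ z in 𝓝[>] b, 0 < F z := by
  obtain ⟨r, hr, hzero⟩ :=
    mem_nhdsGT_iff_exists_Ioo_subset.1 ((hZ b hb).filter_mono nhdsWithin_le_nhds)
  have hne : ∀ y ∈ Ioo b r, F y ≠ 0 := by
    intro y hy hFy
    obtain ⟨z, hFz, hz⟩ := (hpos.and_eventually (Ioo_mem_nhdsGT hy.1)).exists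
    exact hFz.ne' (hzero hy hFy z (Icc_subset_uIcc (Ioo_subset_Icc_self hz)))
  obtain ⟨z, hFz, hz⟩ := (hpos.and_eventually (Ioo_mem_nhdsGT hr)).exists
  filter_upwards [Ioo_mem_nhdsGT hr] with y hy
  by_contra! hFy
  obtain ⟨w, hw, hFw⟩ := intermediate_value_uIcc hF.continuousOn (a := y) (b := z)
    (Icc_subset_uIcc ⟨hFy, hFz.le⟩)
  exact hne w (ordConnected_Ioo.uIcc_subset hy hz hw) hFw

lemma HasIsolatedZeroIntervals.exists_zero_eventually_pos_right (hZ : HasIsolatedZeroIntervals F)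
    (hF : Continuous F) {x y : ℝ} (hxy : x ≤ y) (hx : F x ≤ 0) (hy : 0 < F y) :
    ∃ b ∈ Ico x y, (∀ z ∈ Icc x b, F z ≤ 0) ∧ F b = 0 ∧ ∀ᶠ z in 𝓝[>] b, 0 < F z := by
  let T := {z ∈ Icc x y | 0 < F z}
  have hyT : y ∈ T := ⟨⟨hxy, le_rfl⟩, hy⟩
  have hglb : IsGLB T (sInf T) := isGLB_csInf ⟨y, hyT⟩ ⟨x, fun z hz ↦ hz.1.1⟩
  generalize sInf T = b at hglb
  have hxb : x ≤ b := hglb.2 fun z hz ↦ hz.1.1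
  have hby : b ≤ y := hglb.1 hyT
  have hnonpos : ∀ z ∈ Ico x b, F z ≤ 0 := fun z hz ↦
    not_lt.1 fun hFz ↦ hz.2.not_ge (hglb.1 ⟨⟨hz.1, hz.2.le.trans hby⟩, hFz⟩)
  have hb_nonpos : F b ≤ 0 := by
    rcases hxb.eq_or_lt with rfl | hxb
    · exact hx
    · exact le_of_tendsto hF.continuousAt.continuousWithinAt
        (mem_of_superset (Ico_mem_nhdsLT hxb) hnonpos)
  have hb_nonneg : 0 ≤ F b :=
    closure_minimal (fun z (hz : z ∈ T) ↦ hz.2.le) (isClosed_le continuous_const hF)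
      (hglb.mem_closure ⟨y, hyT⟩)
  have hfreq : ∃ᶠ z in 𝓝[>] b, 0 < F z := by
    have hmem := hglb.frequently_nhds_mem ⟨y, hyT⟩
    refine frequently_nhdsWithin_iff.2 (hmem.mono fun z hz ↦ ⟨hz.2, ?_⟩)
    exact (hglb.1 hz).lt_of_ne fun hbz ↦ hb_nonpos.not_gt (hbz ▸ hz.2)
  have hFb : F b = 0 := hb_nonpos.antisymm hb_nonneg
  refine ⟨b, ⟨hxb, hby.lt_of_ne fun hby ↦ hb_nonpos.not_gt (hby ▸ hy)⟩, fun z hz ↦ ?_, hFb,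
    hZ.eventually_pos_right hF hFb hfreq⟩
  rcases hz.2.eq_or_lt with rfl | hzb
  · exact hb_nonpos
  · exact hnonpos z ⟨hz.1, hzb⟩

lemma HasIsolatedZeroIntervals.reflect (hZ : HasIsolatedZeroIntervals F) :
    HasIsolatedZeroIntervals fun x ↦ -F (-x) := by
  intro x hx
  filter_upwards [(continuous_neg.tendsto x).eventually (hZ (-x) (neg_eq_zero.1 hx))]
    with y hy hFy z hz
  refine neg_eq_zero.2 (hy (neg_eq_zero.1 hFy) (-z) ?_)
  rw [mem_uIcc] at hz ⊢
  grind

lemma HasIsolatedZeroIntervals.exists_isStableInterval (hZ : HasIsolatedZeroIntervals F)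
    (hF : Continuous F) {x y : ℝ} (hxy : x < y) (hx : F x < 0) (hy : 0 < F y) :
    ∃ a b, x < a ∧ b < y ∧ IsStableInterval F a b := by
  obtain ⟨b, hb, hnonpos, hFb, hpos⟩ := hZ.exists_zero_eventually_pos_right hF hxy.le hx.le hy
  obtain ⟨a, ha, hnonneg, -, hneg⟩ := hZ.reflect.exists_zero_eventually_pos_right (by fun_prop)
    (neg_le_neg hb.1) (by simp [hFb]) (by simpa using hx)
  have hab : -a ≤ b := neg_le.1 ha.1
  have hxa : x < -a := lt_neg.1 ha.2
  refine ⟨-a, b, hxa, hb.2, hab, fun z hz ↦ le_antisymm ?_ ?_, ?_, hpos⟩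
  · exact hnonpos z ⟨hxa.le.trans hz.1, hz.2⟩
  · simpa using hnonneg (-z) ⟨neg_le_neg hz.2, neg_le.1 hz.1⟩
  · filter_upwards [(tendsto_neg_nhdsLT_neg (a := a)).eventually hneg] with z hz
    simpa using hz

lemma HasIsolatedZeroIntervals.nonneg_of_le_left (hZ : HasIsolatedZeroIntervals F)
    (hF : Continuous F) {u v c d : ℝ} (hcv : c ≤ v)
    (hstable : ∀ a b, u < a → b < v → ¬ IsStableInterval F a b)
    (hcd : IsStableInterval (-F) c d) : ∀ x ∈ Icc u c, 0 ≤ F x := by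
  intro x hx
  by_contra! hFx
  have hxc : x < c := hx.2.lt_of_ne fun hxc ↦
    hFx.ne (neg_eq_zero.1 (hcd.eq_zero x ⟨hxc.ge, hxc.trans_le hcd.le⟩))
  obtain ⟨y, hFy, hy⟩ := (hcd.neg_left.and (Ioo_mem_nhdsLT hxc)).exists
  obtain ⟨a, b, hxa, hby, hab⟩ := hZ.exists_isStableInterval hF hy.1 hFx (neg_lt_zero.1 hFy)
  exact hstable a b (hx.1.trans_lt hxa) (hby.trans (hy.2.trans_le hcv)) hab

lemma HasIsolatedZeroIntervals.nonpos_of_ge_right (hZ : HasIsolatedZeroIntervals F)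
    (hF : Continuous F) {u v c d : ℝ} (hud : u ≤ d)
    (hstable : ∀ a b, u < a → b < v → ¬ IsStableInterval F a b)
    (hcd : IsStableInterval (-F) c d) : ∀ x ∈ Icc d v, F x ≤ 0 := by
  intro x hx
  by_contra! hFx
  have hdx : d < x := hx.1.lt_of_ne fun hdx ↦
    hFx.ne' (neg_eq_zero.1 (hcd.eq_zero x ⟨hcd.le.trans hx.1, hdx.ge⟩))
  obtain ⟨y, hFy, hy⟩ := (hcd.pos_right.and (Ioo_mem_nhdsGT hdx)).exists
  obtain ⟨a, b, hya, hbx, hab⟩ := hZ.exists_isStableInterval hF hy.2 (neg_pos.1 hFy) hFx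
  exact hstable a b (hud.trans_lt (hy.1.trans hya)) (hbx.trans_le hx.2) hab

lemma isStableInterval_iff {a b : ℝ} :
    IsStableInterval F a b ↔ a ≤ b ∧ (∀ x ∈ Icc a b, F x = 0) ∧
      ∃ ε > 0, (∀ x ∈ Ico (a - ε) a, F x < 0) ∧ ∀ x ∈ Ioc b (b + ε), 0 < F x := by
  constructor
  · rintro ⟨hab, hzero, hneg, hpos⟩
    exact ⟨hab, hzero, exists_forall_mem_Ico_and_forall_mem_Ioc hneg hpos⟩
  · rintro ⟨hab, hzero, ε, hε, hneg, hpos⟩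
    exact ⟨hab, hzero, mem_of_superset (Ico_mem_nhdsLT (sub_lt_self a hε)) hneg,
      mem_of_superset (Ioc_mem_nhdsGT (lt_add_of_pos_right b hε)) hpos⟩

lemma isStableInterval_neg_iff {a b : ℝ} :
    IsStableInterval (-F) a b ↔ a ≤ b ∧ (∀ x ∈ Icc a b, F x = 0) ∧
      ∃ ε > 0, (∀ x ∈ Ico (a - ε) a, 0 < F x) ∧ ∀ x ∈ Ioc b (b + ε), F x < 0 := by
  simp only [isStableInterval_iff, Pi.neg_apply, neg_eq_zero, neg_lt_zero, neg_pos]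

end StableIntervals

section IntervalFamilies

variable {F : ℝ → ℝ} {ℓ : ℕ} {a b c d p q : Fin ℓ → ℝ}

/-- The intervals `[a j, b j]` are disjoint, lie in `[0, 1)` and are listed from left to right, so
that they represent disjoint arcs of the circle `ℝ / ℤ` in clockwise order. -/
structure IsIntervalFamily (a b : Fin ℓ → ℝ) : Prop where
  bounds (j : Fin ℓ) : 0 ≤ a j ∧ a j ≤ b j ∧ b j < 1
  lt_of_lt (j k : Fin ℓ) : j < k → b j < a k

namespace IsIntervalFamily

lemma isCyclicLift (h : IsIntervalFamily a b) (hp : ∀ j, p j ∈ Icc (a j) (b j)) :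
    IsCyclicLift p where
  strictMono j k hjk := (hp j).2.trans_lt ((h.lt_of_lt j k hjk).trans_le (hp k).1)
  lt_add_one j k := by linarith [(hp k).2, (h.bounds k).2.2, (h.bounds j).1, (hp j).1]

lemma isCyclicLift_left (h : IsIntervalFamily a b) : IsCyclicLift a :=
  h.isCyclicLift fun j ↦ left_mem_Icc.2 (h.bounds j).2.1

lemma isCyclicLift_right (h : IsIntervalFamily a b) : IsCyclicLift b :=
  h.isCyclicLift fun j ↦ right_mem_Icc.2 (h.bounds j).2.1

variable [NeZero ℓ]

lemma le_of_lt_cyclicSucc (h : IsIntervalFamily a b) {j m : Fin ℓ} {k : ℤ}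
    (hm : b m + k < cyclicSucc a j) : a m + k ≤ b j := by
  have hmono := h.isCyclicLift_left.strictMono.monotone
  obtain ⟨ham, habm, hbm⟩ := h.bounds m
  obtain ⟨haj, habj, -⟩ := h.bounds j
  obtain ⟨-, hab_succ, hb_succ⟩ := h.bounds (j + 1)
  have hj := fin_val_add_one_eq_ite j
  rcases lt_trichotomy k 0 with hk | rfl | hk
  · have : (k : ℝ) ≤ -1 := by exact_mod_cast Int.le_sub_one_of_lt hk
    linarith
  · rw [Int.cast_zero, add_zero] at hm ⊢
    have hmj : m ≤ j := by
      by_contra! hjm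
      have hle : j + 1 ≤ m := by
        rw [Fin.le_def, hj]
        split_ifs
        exacts [Nat.zero_le _, hjm]
      have hne : (j : ℕ) + 1 ≠ ℓ := ((Nat.succ_le_of_lt hjm).trans_lt m.isLt).ne
      rw [cyclicSucc, if_neg hne] at hm
      linarith [hmono hle]
    exact (hmono hmj).trans habj
  · have hk : (1 : ℝ) ≤ k := by exact_mod_cast hk
    unfold cyclicSucc at hm
    split_ifs at hm hj
    · linarith [hmono (Fin.le_def.2 (hj.trans_le (Nat.zero_le m)))]
    · linarith

lemma isPeakSequence (h : IsIntervalFamily a b) (hF : Continuous F) (hper : Function.Periodic F 1)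
    (hZ : HasIsolatedZeroIntervals F) (hzero : ∀ j, ∀ x ∈ Icc (a j) (b j), F x = 0)
    (hexh : ∀ u v, IsStableInterval F u v → ∃ (m : Fin ℓ) (k : ℤ), u = a m + k ∧ v = b m + k)
    (hcd : ∀ j, IsStableInterval (-F) (c j) (d j)) (hbc : ∀ j, b j < c j)
    (hda : ∀ j, d j < cyclicSucc a j) (hp : ∀ j, p j ∈ Icc (a j) (b j))
    (hq : ∀ j, q j ∈ Icc (c j) (d j)) : IsPeakSequence F p q := by
  have hno (j : Fin ℓ) (u v : ℝ) (hu : b j < u) (hv : v < cyclicSucc a j) :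
      ¬ IsStableInterval F u v := by
    intro huv
    obtain ⟨m, k, rfl, rfl⟩ := hexh u v huv
    exact hu.not_ge (h.le_of_lt_cyclicSucc hv)
  have hcd_zero (j : Fin ℓ) (x : ℝ) (hx : x ∈ Icc (c j) (d j)) : F x = 0 :=
    neg_eq_zero.1 ((hcd j).eq_zero x hx)
  refine ⟨fun j ↦ ((hp j).2.trans (hbc j).le).trans (hq j).1, fun j ↦ ?_, fun j x hx ↦ ?_,
    fun j x hx ↦ ?_⟩
  · exact ((hq j).2.trans (hda j).le).trans (add_le_add_left (hp (j + 1)).1 _)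
  · rcases le_total x (b j) with hxb | hbx
    · exact (hzero j x ⟨(hp j).1.trans hx.1, hxb⟩).ge
    rcases le_total x (c j) with hxc | hcx
    · exact hZ.nonneg_of_le_left hF ((hcd j).le.trans (hda j).le) (hno j) (hcd j) x ⟨hbx, hxc⟩
    · exact (hcd_zero j x ⟨hcx, hx.2.trans (hq j).2⟩).ge
  · rcases le_total x (d j) with hxd | hdx
    · exact (hcd_zero j x ⟨(hq j).1.trans hx.1, hxd⟩).le
    rcases le_total x (cyclicSucc a j) with hxa | hax
    · exact hZ.nonpos_of_ge_right hF ((hbc j).le.trans (hcd j).le) (hno j) (hcd j) x ⟨hdx, hxa⟩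
    · exact (forall_mem_Icc_cyclicSucc hper (P := (· = 0))
        (fun y hy ↦ hzero (j + 1) y ⟨hy.1, hy.2.trans (hp (j + 1)).2⟩) x ⟨hax, hx.2⟩).le

lemma isMaxOn_liftFrom_iff_forall_sub_eq_sSup (h : IsIntervalFamily a b) {S : ℝ → ℝ}
    (hper : Function.Periodic F 1) (hS : ∀ x, HasDerivAt S (F x) x) {i J : Fin ℓ}
    (hzero : ∀ x ∈ Icc (a i) (b i), F x = 0) (hbq : b J ≤ q J) (hqa : q J < cyclicSucc a J)
    {x₀ : ℝ} (hx₀ : x₀ ∈ Icc (a i) (b i)) :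
    IsMaxOn S (Icc x₀ (x₀ + 1)) (liftFrom i q J) ↔ ∀ x ∈ Icc (a i) (b i),
      S (x + Int.fract (q J - x)) - S x = sSup ((fun y ↦ S y - S x) '' Icc x (x + 1)) := by
  have hlift {x : ℝ} (hx : x ∈ Icc (a i) (b i)) : x + Int.fract (q J - x) = liftFrom i q J :=
    add_fract_sub_eq_liftFrom h.isCyclicLift_left h.isCyclicLift_right hbq hqa hx
  have hmax_iff {x : ℝ} (hx : x ∈ Icc (a i) (b i)) :
      S (x + Int.fract (q J - x)) - S x = sSup ((fun y ↦ S y - S x) '' Icc x (x + 1)) ↔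
        IsMaxOn S (Icc x (x + 1)) (liftFrom i q J) := by
    rw [← hlift hx]
    refine sub_eq_sSup_image_iff_isMaxOn isCompact_Icc
      (fun z _ ↦ (hS z).continuousAt.continuousWithinAt) ?_ _
    exact ⟨by linarith [Int.fract_nonneg (q J - x)], by linarith [Int.fract_lt_one (q J - x)]⟩
  constructor
  · exact fun hmax x hx ↦
      (hmax_iff hx).2 (isMaxOn_Icc_add_one_of_eqOn_zero hper hS hzero hx₀ hx hmax)
  · exact fun hall ↦ (hmax_iff hx₀).1 (hall x₀ hx₀)

end IsIntervalFamily

end IntervalFamilies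

/-- Lemma `cuore`: suppose `ℓ ≥ 2`. With
`t(i,j) = V₋(K_j,K_i) + V₊(K_{j+1},K_i)` one has `W(K_i) = min_{1≤j≤ℓ} t(i,j)`;
moreover `t(i,J)` realizes the minimum if and only if
`ΔS(K_i, A_J) = max_{y∈[x̄,x̄+1]} (S(y) − S(x̄))` for every lift `x̄` lying in
`K_i`.

Setting: `F` continuous, 1-periodic, `S(x) = ∫₀ˣ F`, zero set on the torus with
finitely many connected components; stable components `K_i = [a i, b i] ⊆ [0,1)`
in clockwise order with representatives `p i`, and totally unstable components
`A_i = [c i, d i]` with representatives `q i`, `A_i` lying clockwise between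
`K_i` and `K_{i+1}`. Arc integrals `V₊, V₋` and the clockwise `ΔS` are realized
by lifting the second endpoint via `Int.fract`; directed trees rooted at `i`
oriented towards the root are encoded as maps `f : Fin ℓ → Fin ℓ` such that
every vertex reaches `i` under iteration, and
`W(K_i) = min_{trees} Σ_{j≠i} V(K_j, K_{f j})`. -/
theorem stmt_18
    (F : ℝ → ℝ) (hF : Continuous F) (hFper : ∀ x, F (x + 1) = F x)
    (S : ℝ → ℝ) (hS : ∀ x, S x = ∫ t in (0:ℝ)..x, F t)
    (hfin : Finite (ConnectedComponents {x : ℝ | F x = 0 ∧ x ∈ Icc (0:ℝ) 1}))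
    (ℓ : ℕ) [NeZero ℓ] (hl2 : 2 ≤ ℓ)
    (a b p : Fin ℓ → ℝ)
    (hrange : ∀ i, 0 ≤ a i ∧ a i ≤ b i ∧ b i < 1)
    (hord : ∀ i j : Fin ℓ, i < j → b i < a j)
    (hp : ∀ i, p i ∈ Icc (a i) (b i))
    (hstable : ∀ i, (∀ x ∈ Icc (a i) (b i), F x = 0) ∧
      ∃ ε > 0, (∀ x ∈ Ico (a i - ε) (a i), F x < 0) ∧
        (∀ x ∈ Ioc (b i) (b i + ε), 0 < F x))
    (hexh : ∀ a' b' : ℝ, a' ≤ b' → (∀ x ∈ Icc a' b', F x = 0) →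
      (∃ ε > 0, (∀ x ∈ Ico (a' - ε) a', F x < 0) ∧
        (∀ x ∈ Ioc b' (b' + ε), 0 < F x)) →
      ∃ (i : Fin ℓ) (k : ℤ), a' = a i + k ∧ b' = b i + k)
    (c d q : Fin ℓ → ℝ)
    (hq : ∀ i, q i ∈ Icc (c i) (d i))
    (hbetween : ∀ i : Fin ℓ, b i < c i ∧ c i ≤ d i ∧
      d i < a (i + 1) + (if (i : ℕ) + 1 = ℓ then (1:ℝ) else 0))
    (hunstable : ∀ i, (∀ x ∈ Icc (c i) (d i), F x = 0) ∧
      ∃ ε > 0, (∀ x ∈ Ico (c i - ε) (c i), 0 < F x) ∧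
        (∀ x ∈ Ioc (d i) (d i + ε), F x < 0))
    (Vp Vm : ℝ → ℝ → ℝ)
    (hVp : ∀ u v, Vp u v = ∫ s in u..(u + Int.fract (v - u)), max (F s) 0)
    (hVm : ∀ u v, Vm u v = ∫ s in v..(v + Int.fract (u - v)), max (-F s) 0)
    (WK : Fin ℓ → ℝ)
    (hWK : ∀ i, WK i = ⨅ g : {f : Fin ℓ → Fin ℓ // ∀ j, ∃ n, f^[n] j = i},
      ∑ j ∈ Finset.univ.erase i, min (Vp (p j) (p (g.1 j))) (Vm (p j) (p (g.1 j))))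
    (t : Fin ℓ → Fin ℓ → ℝ)
    (ht : ∀ i j : Fin ℓ, t i j = Vm (p j) (p i) + Vp (p (j + 1)) (p i)) :
    ∀ i : Fin ℓ,
      (WK i = ⨅ j : Fin ℓ, t i j) ∧
      (∀ J : Fin ℓ, (t i J = ⨅ j : Fin ℓ, t i j) ↔
        (∀ x ∈ Icc (a i) (b i),
          S (x + Int.fract (q J - x)) - S x
            = sSup ((fun y => S y - S x) '' Icc x (x + 1)))) := by
  intro i
  have hper : Function.Periodic F 1 := hFper
  have hS' (x : ℝ) : HasDerivAt S (F x) x := by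
    rw [funext hS]
    exact (hF.integral_hasStrictDerivAt 0 x).hasDerivAt
  have hK : IsIntervalFamily a b := ⟨hrange, hord⟩
  have hpK : IsCyclicLift p := hK.isCyclicLift hp
  have hpeak : IsPeakSequence F p q := hK.isPeakSequence hF hper
    (hasIsolatedZeroIntervals_of_finite_connectedComponents hper) (fun j ↦ (hstable j).1)
    (fun u v huv ↦ have ⟨hle, hzero, hsign⟩ := isStableInterval_iff.1 huv
      hexh u v hle hzero hsign)
    (fun j ↦ isStableInterval_neg_iff.2 ⟨(hbetween j).2.1, hunstable j⟩)
    (fun j ↦ (hbetween j).1) (fun j ↦ (hbetween j).2.2) hp hq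
  have hcut : t i = cutCost (fun s ↦ max (F s) 0) (fun s ↦ max (-F s) 0) p i := by
    simp only [funext_iff, ht, hVp, hVm, cutCost, arcIntegral, implies_true]
  refine ⟨?_, fun J ↦ ?_⟩
  · simp only [hWK, hVp, hVm, hcut]
    exact iInf_tree_arcIntegral_eq_iInf_cutCost hpK
      (hF.max continuous_const) (hper.comp (max · 0)) (fun x ↦ le_max_right _ _)
      (hF.neg.max continuous_const) (hper.comp (max (-·) 0)) (fun x ↦ le_max_right _ _) i
  · rw [hcut, hpeak.cutCost_eq_iInf_iff hF hper hS' hpK]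
    exact hK.isMaxOn_liftFrom_iff_forall_sub_eq_sSup hper hS' (hstable i).1
      ((hbetween J).1.le.trans (hq J).1) ((hq J).2.trans_lt (hbetween J).2.2) (hp i)
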